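/- arXiv:1809.06912 — 2 statements merged into one kernel-verified Lean document; each statement's English description precedes it below -/
import Mathlib

section
/- Let a₁ < a₂ < a₃ < a₄ < a₅ be natural numbers. Then there exists an ergodic measure preserving system (X, ℬ, μ, T) such that for every ℓ > 0 there exists a set A ∈ ℬ with μ(A) > 0 satisfying μ(T^{−a₁n}A ∩ T^{−a₂n}A ∩ T^{−a₃n}A ∩ T^{−a₄n}A ∩ T^{−a₅n}A) < μ(A)^ℓ for every n ∈ ℕ with n ≠ 0. -/
open MeasureTheory

/-- The Vandermonde determinant of `a 0, a 1, a 2`. -/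
def nodeDet (a : Fin 5 → ℤ) : ℤ := (a 1 - a 0) * (a 2 - a 0) * (a 2 - a 1)

/-- The combination of `x 0, x 1, x 2, x i` that vanishes exactly when the value at `a i` of the
quadratic polynomial interpolating `x 0, x 1, x 2` at `a 0, a 1, a 2` is `x i`. -/
def interpDefect {G : Type*} [AddCommGroup G] (a : Fin 5 → ℤ) (x : Fin 5 → G) (i : Fin 5) : G :=
  nodeDet a • x i
    - ((a 1 - a i) * (a 2 - a i) * (a 2 - a 1)) • x 0
    + ((a 0 - a i) * (a 2 - a i) * (a 2 - a 0)) • x 1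
    - ((a 0 - a i) * (a 1 - a i) * (a 1 - a 0)) • x 2

/-- A bound for the sum of the absolute values of the coefficients in `interpDefect`. -/
def interpBound (a : Fin 5 → ℤ) : ℕ :=
  ∑ i, ((nodeDet a).natAbs
    + ((a 1 - a i) * (a 2 - a i) * (a 2 - a 1)).natAbs
    + ((a 0 - a i) * (a 2 - a i) * (a 2 - a 0)).natAbs
    + ((a 0 - a i) * (a 1 - a i) * (a 1 - a 0)).natAbs)

theorem interpDefect_quadratic {G : Type*} [AddCommGroup G] (a : Fin 5 → ℤ) (u v t : G)
    (i : Fin 5) : interpDefect a (fun i => u + a i • v + (a i) ^ 2 • t) i = 0 := by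
  simp only [interpDefect, nodeDet]
  module

theorem interpDefect_sub {G : Type*} [AddCommGroup G] (a : Fin 5 → ℤ) (x y : Fin 5 → G)
    (i : Fin 5) : interpDefect a (fun i => x i - y i) i
      = interpDefect a x i - interpDefect a y i := by
  simp only [interpDefect]
  module

theorem map_interpDefect {G H : Type*} [AddCommGroup G] [AddCommGroup H] (f : G →+ H)
    (a : Fin 5 → ℤ) (x : Fin 5 → G) (i : Fin 5) :
    f (interpDefect a x i) = interpDefect a (fun i => f (x i)) i := by
  simp [interpDefect]

theorem norm_interpDefect_le {G : Type*} [NormedAddCommGroup G] (a : Fin 5 → ℤ) (x : Fin 5 → G)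
    {ε : ℝ} (hx : ∀ i, ‖x i‖ ≤ ε) (i : Fin 5) :
    ‖interpDefect a x i‖ ≤ interpBound a * ε := by
  have hε : 0 ≤ ε := (norm_nonneg _).trans (hx 0)
  have key : ∀ (n : ℤ) (j : Fin 5), ‖n • x j‖ ≤ n.natAbs * ε := fun n j => by
    refine (norm_zsmul_le n (x j)).trans ?_
    rw [Int.norm_eq_abs, Nat.cast_natAbs, Int.cast_abs]
    exact mul_le_mul_of_nonneg_left (hx j) (abs_nonneg _)
  have hle : (nodeDet a).natAbs
    + ((a 1 - a i) * (a 2 - a i) * (a 2 - a 1)).natAbs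
    + ((a 0 - a i) * (a 2 - a i) * (a 2 - a 0)).natAbs
    + ((a 0 - a i) * (a 1 - a i) * (a 1 - a 0)).natAbs ≤ interpBound a :=
    Finset.single_le_sum (f := fun i => (nodeDet a).natAbs
    + ((a 1 - a i) * (a 2 - a i) * (a 2 - a 1)).natAbs
    + ((a 0 - a i) * (a 2 - a i) * (a 2 - a 0)).natAbs
    + ((a 0 - a i) * (a 1 - a i) * (a 1 - a 0)).natAbs)
      (fun _ _ => Nat.zero_le _) (Finset.mem_univ i)
  have hle' := mul_le_mul_of_nonneg_right (Nat.cast_le (α := ℝ).2 hle) hε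
  simp only [Nat.cast_add, add_mul] at hle'
  refine le_trans ?_ hle'
  refine (norm_sub_le _ _).trans (add_le_add ((norm_add_le _ _).trans (add_le_add
    ((norm_sub_le _ _).trans (add_le_add ?_ ?_)) ?_)) ?_) <;> exact key _ _

/-- Five points which are the values of a quadratic map at distinct nodes and lie on a common
sphere centred at the origin coincide. -/
theorem eq_of_sum_sq_eq_of_interpDefect_eq_zero {ι : Type*} [Fintype ι] {a : Fin 5 → ℤ}
    (ha : Function.Injective a) (v : Fin 5 → ι → ℤ) (R : ℤ) (hR : ∀ i, ∑ j, v i j ^ 2 = R)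
    (h : ∀ i j, interpDefect a (fun i => v i j) i = 0) (i : Fin 5) : v i = v 0 := by
  have hD : nodeDet a ≠ 0 := by
    simp only [nodeDet, ne_eq, mul_eq_zero, sub_eq_zero, ha.eq_iff]
    decide
  obtain ⟨p, q, r, hv⟩ : ∃ p q r : ι → ℤ, ∀ i j,
      nodeDet a * v i j = p j + q j * a i + r j * a i ^ 2 := by
    refine ⟨fun j => a 1 * a 2 * (a 2 - a 1) * v 0 j - a 0 * a 2 * (a 2 - a 0) * v 1 j
        + a 0 * a 1 * (a 1 - a 0) * v 2 j,
      fun j => -(a 1 + a 2) * (a 2 - a 1) * v 0 j + (a 0 + a 2) * (a 2 - a 0) * v 1 j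
        - (a 0 + a 1) * (a 1 - a 0) * v 2 j,
      fun j => (a 2 - a 1) * v 0 j - (a 2 - a 0) * v 1 j + (a 1 - a 0) * v 2 j, fun i j => ?_⟩
    have := h i j
    simp only [interpDefect, smul_eq_mul] at this
    linear_combination this
  have hc : (![∑ j, p j ^ 2 - nodeDet a ^ 2 * R, ∑ j, 2 * (p j * q j),
      ∑ j, (q j ^ 2 + 2 * (p j * r j)), ∑ j, 2 * (q j * r j), ∑ j, r j ^ 2] : Fin 5 → ℤ) = 0 := by
    refine Matrix.eq_zero_of_forall_index_sum_mul_pow_eq_zero ha fun i => ?_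
    have h1 : ∑ j, (p j + q j * a i + r j * a i ^ 2) ^ 2 = nodeDet a ^ 2 * R := by
      rw [← hR i, Finset.mul_sum]
      exact Finset.sum_congr rfl fun j _ => by rw [← hv]; ring
    have h2 : ∑ j, (p j + q j * a i + r j * a i ^ 2) ^ 2 = ∑ j, p j ^ 2
        + (∑ j, 2 * (p j * q j)) * a i + (∑ j, (q j ^ 2 + 2 * (p j * r j))) * a i ^ 2
        + (∑ j, 2 * (q j * r j)) * a i ^ 3 + (∑ j, r j ^ 2) * a i ^ 4 := by
      simp only [Finset.sum_mul, ← Finset.sum_add_distrib]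
      exact Finset.sum_congr rfl fun j _ => by ring
    simp [Fin.sum_univ_five]
    linarith
  have hr : ∀ j, r j = 0 := by
    have := congrFun hc 4
    simp only [Matrix.cons_val, Pi.zero_apply] at this
    rw [Finset.sum_eq_zero_iff_of_nonneg fun _ _ => sq_nonneg _] at this
    exact fun j => by simpa using this j (Finset.mem_univ j)
  have hq : ∀ j, q j = 0 := by
    have := congrFun hc 2
    simp only [Matrix.cons_val, Pi.zero_apply, hr, mul_zero, add_zero] at this
    rw [Finset.sum_eq_zero_iff_of_nonneg fun _ _ => sq_nonneg _] at this
    exact fun j => by simpa using this j (Finset.mem_univ j)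
  funext j
  refine mul_left_cancel₀ hD ?_
  rw [hv, hv, hq, hr]
  ring

theorem eq_zero_of_sum_mul_pow_eq_zero {M : ℤ} : ∀ {d : ℕ} (w : Fin d → ℤ),
    (∀ j, |w j| < M) → ∑ j, w j * M ^ (j : ℕ) = 0 → w = 0
  | 0, w, _, _ => Subsingleton.elim _ _
  | d + 1, w, hw, h => by
    have hM : 0 < M := (abs_nonneg _).trans_lt (hw 0)
    have hsum : ∑ j : Fin d, w j.succ * M ^ ((j.succ : Fin (d + 1)) : ℕ)
        = M * ∑ j : Fin d, w j.succ * M ^ (j : ℕ) := by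
      rw [Finset.mul_sum]
      exact Finset.sum_congr rfl fun j _ => by rw [Fin.val_succ]; ring
    rw [Fin.sum_univ_succ, hsum, Fin.val_zero, pow_zero, mul_one] at h
    have h0 : w 0 = 0 := Int.eq_zero_of_abs_lt_dvd
      ⟨-∑ j : Fin d, w j.succ * M ^ (j : ℕ), by linarith⟩ (hw 0)
    rw [h0, zero_add, mul_eq_zero, or_iff_right hM.ne'] at h
    have ih := eq_zero_of_sum_mul_pow_eq_zero (fun j : Fin d => w j.succ) (fun j => hw _) h
    funext j
    exact Fin.cases h0 (fun j => congrFun ih j) j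

theorem eq_zero_of_norm_coe_div_lt {k : ℤ} {Q : ℕ} (hQ : 0 < Q) (hk : |k| < Q)
    (h : ‖(((k : ℝ) / Q : ℝ) : UnitAddCircle)‖ < 1 / Q) : k = 0 := by
  have hQ' : (0 : ℝ) < Q := Nat.cast_pos.2 hQ
  rw [UnitAddCircle.norm_eq, lt_div_iff₀ hQ', ← abs_of_pos hQ', ← abs_mul, abs_of_pos hQ',
    sub_mul, div_mul_cancel₀ _ hQ'.ne'] at h
  have h1 : |k - round ((k : ℝ) / Q) * (Q : ℤ)| < 1 := by exact_mod_cast h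
  rw [Int.abs_lt_one_iff, sub_eq_zero] at h1
  exact Int.eq_zero_of_abs_lt_dvd (m := Q) ⟨_, h1.trans (mul_comm _ _)⟩ hk

section Torus

noncomputable local instance : MeasureSpace UnitAddCircle := ⟨AddCircle.haarAddCircle⟩

local instance : Measure.IsAddHaarMeasure (volume : Measure UnitAddCircle) :=
  inferInstanceAs (Measure.IsAddHaarMeasure AddCircle.haarAddCircle)

local instance : IsProbabilityMeasure (volume : Measure UnitAddCircle) :=
  inferInstanceAs (IsProbabilityMeasure AddCircle.haarAddCircle)

/-- The affine skew product `(x, y) ↦ (x + 2β, y + x + β)` on the two-dimensional torus. -/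
def skewProduct (β : UnitAddCircle) (x : UnitAddTorus (Fin 2)) : UnitAddTorus (Fin 2) :=
  ![x 0 + (2 : ℕ) • β, x 1 + x 0 + β]

theorem skewProduct_iterate (β : UnitAddCircle) (n : ℕ) (x : UnitAddTorus (Fin 2)) :
    (skewProduct β)^[n] x = ![x 0 + (2 * n) • β, x 1 + n • x 0 + n ^ 2 • β] := by
  induction n with
  | zero => funext i; fin_cases i <;> simp
  | succ n ih =>
    rw [Function.iterate_succ_apply', ih, skewProduct]
    funext i
    fin_cases i
    · simp only [Fin.zero_eta, Matrix.cons_val]; module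
    · simp only [Fin.mk_one, Matrix.cons_val]; module

theorem volume_closedBall_unitAddCircle (x : UnitAddCircle) {ε : ℝ} (hε : 2 * ε ≤ 1) :
    volume (Metric.closedBall x ε) = ENNReal.ofReal (2 * ε) := by
  have h := AddCircle.volume_closedBall 1 (x := x) ε
  rw [min_eq_right hε, AddCircle.volume_eq_smul_haarAddCircle, Measure.smul_apply,
    ENNReal.ofReal_one, one_smul] at h
  exact h

/-- The endomorphism of a torus given by an integer matrix. -/
def matrixHom {d : Type*} [Fintype d] (A : Matrix d d ℤ) : UnitAddTorus d →+ UnitAddTorus d where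
  toFun x i := ∑ j, A i j • x j
  map_zero' := by funext i; simp
  map_add' x y := by funext i; simp [Finset.sum_add_distrib]

theorem matrixHom_apply {d : Type*} [Fintype d] (A : Matrix d d ℤ) (x : UnitAddTorus d) (i : d) :
    matrixHom A x i = ∑ j, A i j • x j := rfl

theorem matrixHom_surjective {d : Type*} [Fintype d] [DecidableEq d] {A : Matrix d d ℤ}
    (hA : A.det ≠ 0) : Function.Surjective (matrixHom A) := fun y => by
  let w : UnitAddTorus d := fun i => DivisibleBy.div (y i) A.det
  refine ⟨matrixHom A.adjugate w, funext fun i => ?_⟩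
  have h : ∀ k, ∑ j, A i j * A.adjugate j k = (A.det • (1 : Matrix d d ℤ)) i k := fun k => by
    rw [← Matrix.mul_adjugate, Matrix.mul_apply]
  simp only [matrixHom_apply, Finset.smul_sum, smul_smul]
  rw [Finset.sum_comm]
  simp only [← Finset.sum_smul, h, Matrix.smul_apply, Matrix.one_apply]
  rw [Finset.sum_eq_single i (fun k _ hk => by simp [hk.symm]) (by simp), if_pos rfl, smul_eq_mul,
    mul_one]
  exact DivisibleBy.div_cancel _ hA

theorem measurePreserving_matrixHom {d : Type*} [Fintype d] [DecidableEq d] {A : Matrix d d ℤ}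
    (hA : A.det ≠ 0) : MeasurePreserving (matrixHom A) volume volume := by
  refine (matrixHom A).measurePreserving ?_ (matrixHom_surjective hA) rfl
  exact continuous_pi fun i => by simp only [matrixHom_apply]; fun_prop

theorem measurePreserving_skewProduct (β : UnitAddCircle) :
    MeasurePreserving (skewProduct β) volume volume := by
  have h := (measurePreserving_add_right volume (![(2 : ℕ) • β, β] : UnitAddTorus (Fin 2))).comp
    (measurePreserving_matrixHom (A := !![1, 0; 1, 1]) (by simp))
  convert h using 1
  funext x i
  rw [Function.comp_apply, Pi.add_apply, matrixHom_apply, Fin.sum_univ_two]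
  fin_cases i <;> simp [skewProduct, add_comm]

theorem mFourier_skewProduct (β : UnitAddCircle) (n : Fin 2 → ℤ) (x : UnitAddTorus (Fin 2)) :
    UnitAddTorus.mFourier n (skewProduct β x) = (fourier (2 * n 0 + n 1) β : ℂ) *
      UnitAddTorus.mFourier ![n 0 + n 1, n 1] x := by
  simp only [UnitAddTorus.mFourier, ContinuousMap.coe_mk, Fin.prod_univ_two, skewProduct,
    Matrix.cons_val, fourier_apply, ← Circle.coe_mul, ← AddCircle.toCircle_add]
  congr 2
  module

open UnitAddTorus in
theorem ergodic_skewProduct {β : ℝ} (hβ : Irrational β) :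
    Ergodic (skewProduct (β : UnitAddCircle)) volume := by
  refine ⟨measurePreserving_skewProduct _, ⟨fun s hs hinv => ?_⟩⟩
  set b : UnitAddCircle := (β : UnitAddCircle)
  let f : UnitAddTorus (Fin 2) → ℂ := s.indicator fun _ => 1
  have hf : ∀ x, f (skewProduct b x) = f x := fun x => by
    have : skewProduct b x ∈ s ↔ x ∈ s := by rw [← Set.mem_preimage, hinv]
    by_cases hx : x ∈ s <;> simp [f, this, hx]
  have hfm : Measurable f := measurable_const.indicator hs
  have hcoeff : ∀ n : Fin 2 → ℤ, mFourierCoeff f n =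
      (fourier (-(2 * n 0 + n 1)) b : ℂ) * mFourierCoeff f ![n 0 + n 1, n 1] := fun n => by
    have hm : Measurable fun t => mFourier (-n) t • f t :=
      (mFourier (-n)).continuous.measurable.smul hfm
    have h1 := integral_map (μ := volume)
      (measurePreserving_skewProduct b).measurable.aemeasurable hm.aestronglyMeasurable
    rw [(measurePreserving_skewProduct b).map_eq] at h1
    rw [mFourierCoeff, h1, mFourierCoeff, ← integral_const_mul]
    refine integral_congr_ae (.of_forall fun x => ?_)
    have hn : (-![n 0 + n 1, n 1] : Fin 2 → ℤ) = ![-n 0 + -n 1, -n 1] := by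
      funext i; fin_cases i <;> simp; ring
    simp only [hf, mFourier_skewProduct, smul_eq_mul, hn, Pi.neg_apply, mul_assoc]
    congr 3
    ring
  have hnorm : ∀ n : Fin 2 → ℤ, ‖mFourierCoeff f n‖ = ‖mFourierCoeff f ![n 0 + n 1, n 1]‖ :=
    fun n => by rw [hcoeff, norm_mul, fourier_apply, Circle.norm_coe, one_mul]
  have hnorm' : ∀ (j k : ℤ) (m : ℕ),
      ‖mFourierCoeff f ![j + m * k, k]‖ = ‖mFourierCoeff f ![j, k]‖ := fun j k m => by
    induction m with
    | zero => simp
    | succ m ih =>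
      rw [← ih, hnorm ![j + m * k, k]]
      simp only [Matrix.cons_val]
      push_cast
      ring_nf
  let F : Lp ℂ 2 (volume : Measure (UnitAddTorus (Fin 2))) :=
    indicatorConstLp 2 hs (measure_ne_top _ _) 1
  have hF : (F : UnitAddTorus (Fin 2) → ℂ) =ᵐ[volume] f := indicatorConstLp_coeFn
  have hFc : ∀ n, mFourierCoeff F n = mFourierCoeff f n := fun n =>
    integral_congr_ae (hF.mono fun x hx => by simp only [hx])
  have hsum : Summable fun n => ‖mFourierCoeff f n‖ ^ 2 := by
    have := (hasSum_sq_mFourierCoeff F).summable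
    simpa only [hFc] using this
  have hzero : ∀ n : Fin 2 → ℤ, n ≠ 0 → mFourierCoeff f n = 0 := fun n hn => by
    by_cases hk : n 1 = 0
    · have hj : n 0 ≠ 0 := fun h => hn (by funext i; fin_cases i <;> assumption)
      have h := hcoeff n
      have hn' : (![n 0 + n 1, n 1] : Fin 2 → ℤ) = n := by
        funext i; fin_cases i <;> simp [hk]
      rw [hn', eq_comm] at h
      by_contra hne
      have h1 := (mul_eq_right₀ hne).1 h
      rw [hk, add_zero, fourier_apply, Circle.coe_eq_one, ← AddCircle.toCircle_zero,
        (AddCircle.injective_toCircle one_ne_zero).eq_iff, ← AddCircle.coe_zsmul,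
        AddCircle.coe_eq_zero_iff] at h1
      obtain ⟨m, hm⟩ := h1
      simp only [zsmul_eq_mul, mul_one] at hm
      have hirr := hβ.intCast_mul (m := -(2 * n 0)) (by simpa using hj)
      exact hirr ⟨m, by rw [← hm]; simp⟩
    · have hinj : Function.Injective fun m : ℕ => (![n 0 + m * n 1, n 1] : Fin 2 → ℤ) :=
        fun m m' h => by
          have := congrFun h 0
          simpa [hk] using this
      have := hsum.comp_injective hinj
      simp only [Function.comp_def, hnorm', summable_const_iff] at this
      have hn' : (![n 0, n 1] : Fin 2 → ℤ) = n := by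
        funext i; fin_cases i <;> simp
      simpa [hn'] using this
  have hFeq : F = mFourierCoeff f 0 • mFourierLp 2 0 := by
    refine (hasSum_mFourier_series_L2 F).unique ?_
    rw [← hFc]
    exact hasSum_single 0 fun n hn => by rw [hFc, hzero n hn, zero_smul]
  have hconst : ∀ᵐ x, f x = mFourierCoeff f 0 := by
    have h1 := Lp.coeFn_smul (mFourierCoeff f 0) (mFourierLp (d := Fin 2) 2 0)
    rw [← hFeq] at h1
    filter_upwards [hF, h1, coeFn_mFourierLp (d := Fin 2) 2 0] with x hx hx1 hx2
    rw [← hx, hx1, Pi.smul_apply, hx2, mFourier_zero]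
    simp
  rw [Filter.eventuallyConst_set]
  by_cases hc : mFourierCoeff f 0 = 1
  · left
    filter_upwards [hconst] with x hx
    by_contra hxs
    simp [f, hc, hxs] at hx
  · right
    filter_upwards [hconst] with x hx hxs
    simp [f, Ne.symm hc, hxs] at hx

theorem behrend_map_lt {M : ℕ} : ∀ {d : ℕ} (v : Fin d → ℕ), (∀ j, v j < M) →
    Behrend.map M v < M ^ d
  | 0, v, _ => by simp
  | d + 1, v, hv => by
    have ih := behrend_map_lt (v ∘ Fin.succ) fun j => hv _
    rw [Behrend.map_succ', pow_succ]
    have := hv 0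
    nlinarith [Nat.mul_le_mul_right M (Nat.succ_le_of_lt ih)]

theorem exists_large_behrend_sphere {C ℓ : ℕ} (hC : 2 ≤ C) :
    ∃ m k : ℕ, 0 < m ∧ 0 < (Behrend.sphere (2 * ℓ + 1) m k).card ∧
      ((Behrend.sphere (2 * ℓ + 1) m k).card : ℝ) * (2 / (C ^ (2 * ℓ + 3) * m ^ (2 * ℓ + 1))) ^ 2 <
        ((Behrend.sphere (2 * ℓ + 1) m k).card *
          (2 / (C ^ (2 * ℓ + 3) * m ^ (2 * ℓ + 1)))) ^ ℓ := by
  set d := 2 * ℓ + 1 with hd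
  have hC0 : (2 : ℝ) ≤ C := by exact_mod_cast hC
  have hd0 : (0 : ℝ) < d := by positivity
  set c : ℝ := 2 / (C ^ (2 * ℓ + 3) * d) with hc
  have hc0 : 0 < c := by positivity
  obtain ⟨m, hm⟩ := exists_nat_gt (2 / c ^ ℓ)
  have hm0 : (0 : ℝ) < m := lt_of_le_of_lt (by positivity) hm
  obtain ⟨k, hk⟩ := Behrend.exists_large_sphere d m
  set N := (Behrend.sphere d m k).card
  set δ : ℝ := 2 / (C ^ (2 * ℓ + 3) * m ^ d) with hδ
  have hδ0 : 0 < δ := by positivity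
  have hCpow : (2 : ℝ) ≤ C ^ (2 * ℓ + 3) :=
    hC0.trans (le_self_pow₀ (by linarith) (by omega))
  have hN0 : (0 : ℝ) < N := lt_of_lt_of_le (by push_cast; positivity) hk
  have hNle : (N : ℝ) ≤ m ^ d := by
    have := Finset.card_le_card (Behrend.sphere_subset_box (n := d) (d := m) (k := k))
    rw [Behrend.card_box] at this
    exact_mod_cast this
  have hle : N * δ ≤ 1 := by
    rw [hδ, ← mul_div_assoc, div_le_one (by positivity)]
    nlinarith
  have hge : c / m ^ 2 ≤ N * δ := by
    refine le_trans (le_of_eq ?_) (mul_le_mul_of_nonneg_right hk hδ0.le)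
    rw [hc, hδ]
    push_cast
    field_simp
  have hδle : δ ≤ 2 / m ^ d := by
    rw [hδ]
    gcongr
    nlinarith [pow_pos hm0 d]
  refine ⟨m, k, by exact_mod_cast hm0, by exact_mod_cast hN0, ?_⟩
  calc (N : ℝ) * δ ^ 2 = N * δ * δ := by ring
    _ ≤ 1 * (2 / m ^ d) := by gcongr
    _ = 2 / m / m ^ (2 * ℓ) := by rw [hd, pow_succ]; field_simp
    _ < c ^ ℓ / m ^ (2 * ℓ) := by
      gcongr
      rw [div_lt_iff₀ hm0]
      rwa [div_lt_iff₀' (by positivity)] at hm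
    _ = (c / m ^ 2) ^ ℓ := by rw [div_pow c, ← pow_mul]
    _ ≤ (N * δ) ^ ℓ := by gcongr

/-- The homomorphism `k ↦ k / Q` from the integers to the circle. -/
noncomputable def divHom (Q : ℕ) : ℤ →+ UnitAddCircle where
  toFun k := ((k : ℝ) / Q : ℝ)
  map_zero' := by simp
  map_add' x y := by push_cast; rw [add_div, AddCircle.coe_add]

theorem eq_zero_of_norm_divHom_lt {k : ℤ} {Q : ℕ} (hk : |k| < Q)
    (h : ‖divHom Q k‖ < 1 / Q) : k = 0 :=
  eq_zero_of_norm_coe_div_lt (by have := abs_nonneg k; omega) hk h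

theorem abs_interpDefect_lt {a x : Fin 5 → ℤ} {M K : ℕ} (hK : 0 < K) (hM : interpBound a < M)
    (hx0 : ∀ i, 0 ≤ x i) (hx : ∀ i, x i < K) (i : Fin 5) :
    |interpDefect a x i| < (M * K : ℕ) := by
  have h := norm_interpDefect_le a x (ε := K) (fun i => by
    rw [Int.norm_eq_abs, abs_of_nonneg (by exact_mod_cast hx0 i)]
    exact_mod_cast (hx i).le) i
  rw [Int.norm_eq_abs] at h
  have h' : |interpDefect a x i| ≤ (interpBound a * K : ℕ) := by exact_mod_cast h
  exact h'.trans_lt (by exact_mod_cast Nat.mul_lt_mul_of_pos_right hM hK)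

/-- If five vectors of a sphere are encoded as points of the circle which are close to the values
of a quadratic map at distinct nodes, then the vectors coincide. -/
theorem sphere_eq_of_norm_sub_le {a : Fin 5 → ℤ} (ha : Function.Injective a) {C m d k : ℕ}
    (hm : 0 < m) (hC : interpBound a < C) {ε : ℝ}
    (hε : interpBound a * ε < 1 / (C * (C * m) ^ d : ℕ)) {v : Fin 5 → Fin d → ℕ}
    (hv : ∀ i, v i ∈ Behrend.sphere d m k) {x : Fin 5 → UnitAddCircle}
    (hx : ∀ i, interpDefect a x i = 0)
    (hxv : ∀ i, ‖x i - divHom (C * (C * m) ^ d) (Behrend.map (C * m) (v i) : ℕ)‖ ≤ ε)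
    (i : Fin 5) : v i = v 0 := by
  have hmem : ∀ i, (∀ j, v i j < m) ∧ ∑ j, v i j ^ 2 = k := fun i => by
    simpa [Behrend.sphere, Behrend.mem_box] using hv i
  have hmC : m ≤ C * m := Nat.le_mul_of_pos_left _ (by omega)
  have hcode : ∀ i, interpDefect a (fun i => ((Behrend.map (C * m) (v i) : ℕ) : ℤ)) i = 0 :=
    fun i => by
    refine eq_zero_of_norm_divHom_lt (Q := C * (C * m) ^ d) (abs_interpDefect_lt
      (by have := Nat.mul_pos (by omega : 0 < C) hm; positivity) hC
      (fun i => Int.natCast_nonneg _) (fun i => by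
        exact_mod_cast behrend_map_lt _ fun j => ((hmem i).1 j).trans_le hmC) i) ?_
    have := norm_interpDefect_le a _ hxv i
    rw [interpDefect_sub, hx, zero_sub, norm_neg, ← map_interpDefect] at this
    exact this.trans_lt hε
  have hdigit : ∀ i, (fun j => interpDefect a (fun i => (v i j : ℤ)) i) = 0 := fun i => by
    refine eq_zero_of_sum_mul_pow_eq_zero (M := (C * m : ℕ)) _ (fun j => abs_interpDefect_lt hm hC
      (fun i => Int.natCast_nonneg _) (fun i => by exact_mod_cast (hmem i).1 j) i) ?_
    rw [← hcode i]
    simp only [interpDefect, Behrend.map, AddMonoidHom.coe_mk, ZeroHom.coe_mk, smul_eq_mul,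
      sub_mul, add_mul, Finset.sum_sub_distrib, Finset.sum_add_distrib, mul_assoc,
      ← Finset.mul_sum]
    push_cast
    rfl
  have h := eq_of_sum_sq_eq_of_interpDefect_eq_zero ha (fun i j => (v i j : ℤ)) k
    (fun i => by exact_mod_cast (hmem i).2) (fun i j => congrFun (hdigit i) j) i
  funext j
  exact_mod_cast congrFun h j

theorem disjoint_closedBall_divHom {C m d k : ℕ} (hC : 3 ≤ C) {ε : ℝ}
    (hε : 2 * ε < 1 / (C * (C * m) ^ d : ℕ)) {v w : Fin d → ℕ}
    (hv : v ∈ Behrend.sphere d m k) (hw : w ∈ Behrend.sphere d m k) (hvw : v ≠ w) :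
    Disjoint
      (Metric.closedBall (divHom (C * (C * m) ^ d) (Behrend.map (C * m) v : ℕ)) ε)
      (Metric.closedBall (divHom (C * (C * m) ^ d) (Behrend.map (C * m) w : ℕ)) ε) := by
  have hlt : ∀ {v}, v ∈ Behrend.sphere d m k → ∀ j, v j < C * m := fun {v} hv j =>
    (Behrend.mem_box.1 (Behrend.sphere_subset_box hv) j).trans_le
      (Nat.le_mul_of_pos_left _ (by omega))
  refine Set.disjoint_left.2 fun x hxv hxw => hvw ?_
  refine Behrend.map_injOn (d := C * m) (hlt hv) (hlt hw) ?_
  have h1 := behrend_map_lt v (hlt hv)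
  have h2 := behrend_map_lt w (hlt hw)
  have h3 : (C * m) ^ d ≤ C * (C * m) ^ d := Nat.le_mul_of_pos_left _ (by omega)
  have h := eq_zero_of_norm_divHom_lt (Q := C * (C * m) ^ d)
    (k := (Behrend.map (C * m) v : ℕ) - (Behrend.map (C * m) w : ℕ))
    (by rw [abs_lt]; omega) (by
      rw [map_sub, ← dist_eq_norm]
      have := dist_triangle_right (divHom (C * (C * m) ^ d) (Behrend.map (C * m) v : ℕ))
        (divHom (C * (C * m) ^ d) (Behrend.map (C * m) w : ℕ)) x
      rw [Metric.mem_closedBall'] at hxv hxw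
      linarith)
  omega

theorem volume_iInter_preimage_skewProduct_le {a : Fin 5 → ℕ} (ha : Function.Injective a)
    (β : UnitAddCircle) {C m d k : ℕ} (hm : 0 < m) (hC : interpBound (fun i => (a i : ℤ)) < C)
    {ε : ℝ} (hε : interpBound (fun i => (a i : ℤ)) * ε < 1 / (C * (C * m) ^ d : ℕ))
    (hε' : 2 * ε ≤ 1) {n : ℕ} (hn : n ≠ 0) :
    volume (⋂ i : Fin 5, (skewProduct β)^[a i * n] ⁻¹' ⋃ v ∈ Behrend.sphere d m k,
      (fun x : UnitAddTorus (Fin 2) => x 1) ⁻¹'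
        Metric.closedBall (divHom (C * (C * m) ^ d) (Behrend.map (C * m) v : ℕ)) ε) ≤
      (Behrend.sphere d m k).card * ENNReal.ofReal (2 * ε) ^ 2 := by
  set c : (Fin d → ℕ) → UnitAddCircle :=
    fun v => divHom (C * (C * m) ^ d) (Behrend.map (C * m) v : ℕ)
  set A : Matrix (Fin 2) (Fin 2) ℤ := !![((a 0 * n : ℕ) : ℤ), 1; ((a 1 * n : ℕ) : ℤ), 1] with hA
  have hdet : A.det ≠ 0 := by
    rw [hA, Matrix.det_fin_two_of, mul_one, one_mul, sub_ne_zero]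
    simpa [hn] using ha.ne (by decide : (0 : Fin 5) ≠ 1)
  let t : Fin 2 → UnitAddCircle := ![(a 0 * n) ^ 2 • β, (a 1 * n) ^ 2 • β]
  have hsub : (⋂ i : Fin 5, (skewProduct β)^[a i * n] ⁻¹' ⋃ v ∈ Behrend.sphere d m k,
      (fun x : UnitAddTorus (Fin 2) => x 1) ⁻¹' Metric.closedBall (c v) ε) ⊆
      ⋃ v ∈ Behrend.sphere d m k,
        matrixHom A ⁻¹' Set.univ.pi fun i => Metric.closedBall (c v - t i) ε := fun x hx => by
    simp only [Set.mem_iInter, Set.mem_preimage, Set.mem_iUnion,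
      skewProduct_iterate, Matrix.cons_val] at hx
    choose v hv hxv using hx
    have heq := sphere_eq_of_norm_sub_le (a := fun i => (a i : ℤ))
      (Nat.cast_injective.comp ha) hm hC hε hv
      (x := fun i => x 1 + (a i : ℤ) • (n • x 0) + (a i : ℤ) ^ 2 • (n ^ 2 • β))
      (interpDefect_quadratic _ _ _ _) (fun i => by
        have := hxv i
        rw [Metric.mem_closedBall, dist_eq_norm] at this
        refine le_of_eq_of_le (congrArg norm ?_) this
        module)
    simp only [Set.mem_iUnion]
    refine ⟨v 0, hv 0, fun i _ => ?_⟩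
    rw [Metric.mem_closedBall, dist_eq_norm, matrixHom_apply, Fin.sum_univ_two]
    fin_cases i
    · have := hxv 0
      rw [Metric.mem_closedBall, dist_eq_norm] at this
      refine le_of_eq_of_le (congrArg norm ?_) this
      simp only [hA, t, Fin.zero_eta, Matrix.cons_val, Matrix.of_apply]
      module
    · have := hxv 1
      rw [heq, Metric.mem_closedBall, dist_eq_norm] at this
      refine le_of_eq_of_le (congrArg norm ?_) this
      simp only [hA, t, Fin.mk_one, Matrix.cons_val, Matrix.of_apply]
      module
  refine (measure_mono hsub).trans ((measure_biUnion_finset_le _ _).trans (le_of_eq ?_))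
  rw [← nsmul_eq_mul]
  refine Finset.sum_eq_card_nsmul fun v _ => ?_
  rw [(measurePreserving_matrixHom hdet).measure_preimage
    (MeasurableSet.univ_pi fun i => measurableSet_closedBall).nullMeasurableSet, volume_pi_pi]
  simp [volume_closedBall_unitAddCircle _ hε']

theorem volume_biUnion_closedBall {C m d k : ℕ} (hC : 3 ≤ C) {ε : ℝ}
    (hε : 2 * ε < 1 / (C * (C * m) ^ d : ℕ)) (hε' : 2 * ε ≤ 1) :
    volume (⋃ v ∈ Behrend.sphere d m k, (fun x : UnitAddTorus (Fin 2) => x 1) ⁻¹'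
        Metric.closedBall (divHom (C * (C * m) ^ d) (Behrend.map (C * m) v : ℕ)) ε) =
      (Behrend.sphere d m k).card * ENNReal.ofReal (2 * ε) := by
  have hm : Measurable fun x : UnitAddTorus (Fin 2) => x 1 := measurable_pi_apply 1
  rw [measure_biUnion_finset ?_ fun v _ => hm measurableSet_closedBall, ← nsmul_eq_mul]
  swap
  · exact fun v hv w hw hvw => (disjoint_closedBall_divHom hC hε hv hw hvw).preimage _
  refine Finset.sum_eq_card_nsmul fun v _ => ?_
  rw [← volume_closedBall_unitAddCircle _ hε']
  exact (measurePreserving_eval (fun _ : Fin 2 => (volume : Measure UnitAddCircle))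
    1).measure_preimage measurableSet_closedBall.nullMeasurableSet

theorem no_optimal_recurrence_five_terms (a : Fin 5 → ℕ) (ha : StrictMono a) :
    ∃ (X : Type) (_ : MeasurableSpace X) (μ : Measure X) (T : X → X),
      IsProbabilityMeasure μ ∧ Ergodic T μ ∧
      ∀ ℓ : ℕ, 0 < ℓ → ∃ A : Set X, MeasurableSet A ∧ 0 < μ A ∧
        ∀ n : ℕ, n ≠ 0 →
          μ (⋂ i : Fin 5, T^[a i * n] ⁻¹' A) < μ A ^ ℓ := by
  refine ⟨UnitAddTorus (Fin 2), inferInstance, volume,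
    skewProduct ((√2 : ℝ) : UnitAddCircle), inferInstance, ergodic_skewProduct irrational_sqrt_two,
    fun ℓ _ => ?_⟩
  set C : ℕ := interpBound (fun i => (a i : ℤ)) + 3 with hC
  obtain ⟨m, k, hm, hN, hlt⟩ := exists_large_behrend_sphere (C := C) (ℓ := ℓ) (by omega)
  set d := 2 * ℓ + 1
  set S := Behrend.sphere d m k
  set ε : ℝ := 1 / (C ^ (2 * ℓ + 3) * m ^ d) with hε
  have hδ : 2 / ((C : ℝ) ^ (2 * ℓ + 3) * m ^ d) = 2 * ε := by rw [hε]; ring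
  rw [hδ] at hlt
  have hm0 : (0 : ℝ) < m := by exact_mod_cast hm
  have hε0 : 0 < ε := by positivity
  have hCε : C * ε = 1 / (C * (C * m) ^ d : ℕ) := by
    rw [hε]
    push_cast
    rw [mul_pow, show 2 * ℓ + 3 = d + 2 from rfl, pow_add]
    field_simp
  have hCr : (C : ℝ) = interpBound (fun i => (a i : ℤ)) + 3 := by rw [hC]; push_cast; rfl
  have hbound : interpBound (fun i => (a i : ℤ)) * ε < 1 / (C * (C * m) ^ d : ℕ) := by
    rw [← hCε, hCr]; linarith
  have h2ε : 2 * ε < 1 / (C * (C * m) ^ d : ℕ) := by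
    rw [← hCε, hCr]
    gcongr
    have := Nat.cast_nonneg (α := ℝ) (interpBound fun i => (a i : ℤ))
    linarith
  have hε1 : 2 * ε ≤ 1 := by
    refine h2ε.le.trans (div_le_self zero_le_one ?_)
    exact_mod_cast Nat.succ_le_of_lt (by positivity : 0 < C * (C * m) ^ d)
  have hA := volume_biUnion_closedBall (m := m) (d := d) (k := k) (by omega : 3 ≤ C) h2ε hε1
  refine ⟨_, ?_, ?_, fun n hn => (volume_iInter_preimage_skewProduct_le (k := k) ha.injective _ hm
    (by omega : _ < C) hbound hε1 hn).trans_lt ?_⟩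
  · exact Finset.measurableSet_biUnion _ fun v _ =>
      measurable_pi_apply 1 measurableSet_closedBall
  · rw [hA]
    exact ENNReal.mul_pos (by exact_mod_cast hN.ne') (by simpa using hε0)
  · rw [hA, ← ENNReal.ofReal_natCast, ← ENNReal.ofReal_pow (by positivity),
      ← ENNReal.ofReal_mul (by positivity), ← ENNReal.ofReal_mul (by positivity),
      ← ENNReal.ofReal_pow (by positivity)]
    exact (ENNReal.ofReal_lt_ofReal_iff (by positivity)).2 hlt

end Torus
end

section
/- Let m, d, ℓ ∈ ℕ with ℓ > d, let C > 0, and let V ⊆ ℚ^d be a linear subspace containing the vector (1, 1, …, 1). Suppose that there exists N₀ such that for every N ≥ N₀ and every function c : [N]^m → [0, 1] one has (1/|V ∩ [N]^d|^m) Σ c(a₁)c(a₂)⋯c(a_d) ≥ C (1 − d/ℓ)^ℓ ‖c‖_{L¹}^ℓ, where the sum is over all tuples (a₁, …, a_d) with each a_i ∈ [N]^m such that (a₁(j), …, a_d(j)) ∈ V for every j ∈ {1, …, m}. Let V̄ ⊆ ℝ^d be the closure of V in ℝ^d, and let Y := (V̄/ℤ^d)^m, a closed subgroup (subtorus) of 𝕋^{d×m}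 with Haar probability measure μ_Y; write a point of Y as (y₁, …, y_d) with each y_i ∈ 𝕋^m, where (y₁(j), …, y_d(j)) ∈ V̄/ℤ^d for each j. Then for every measurable function f : 𝕋^m → [0, 1], ∫_Y f(y₁) f(y₂) ⋯ f(y_d) dμ_Y(y₁, …, y_d) ≥ C (1 − d/ℓ)^ℓ (∫_{𝕋^m} f dμ_{𝕋^m})^ℓ, where μ_{𝕋^m} is the Haar probability measure on 𝕋^m = (ℝ/ℤ)^m. -/
/-- `q : Fin d → Fin m → ℕ` satisfies the condition `V^m`: for every coordinate `j`,
the vector `(q 0 j, …, q (d-1) j)` lies in `V`. -/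
def inVm {d m : ℕ} (V : Submodule ℚ (Fin d → ℚ)) (q : Fin d → Fin m → ℕ) : Prop :=
  ∀ j : Fin m, (fun i : Fin d => ((q i j : ℕ) : ℚ)) ∈ V

/-- The number of points of `[N]^d` lying in `V`. -/
noncomputable def VboxCard {d : ℕ} (V : Submodule ℚ (Fin d → ℚ)) (N : ℕ) : ℕ :=
  Set.ncard {x : Fin d → ℕ | (∀ i, x i < N) ∧ (fun i : Fin d => ((x i : ℕ) : ℚ)) ∈ V}

/-- The density `d_{m,N}(E) = |E| / N^m`. -/
noncomputable def dmn (m N : ℕ) (E : Set (Fin m → ℕ)) : ℝ :=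
  (E.ncard : ℝ) / (N : ℝ) ^ m

/-- The density `D_{m,N}(V^m, E)` of solutions of the linear system determined by `V`
with entries in `E`, among all solutions with entries in `[N]^m`. -/
noncomputable def Dmn {d : ℕ} (V : Submodule ℚ (Fin d → ℚ)) (m N : ℕ)
    (E : Set (Fin m → ℕ)) : ℝ :=
  (Set.ncard {q : Fin d → Fin m → ℕ | (∀ i, q i ∈ E) ∧ inVm V q} : ℝ) /
    (Set.ncard {q : Fin d → Fin m → ℕ | (∀ i j, q i j < N) ∧ inVm V q} : ℝ)

/-- The normalized sum `(1/|V ∩ [N]^d|^m) Σ c(a₁)⋯c(a_d)` over tuples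
`(a₁, …, a_d) ∈ ([N]^m)^d` satisfying the condition `V^m`. -/
noncomputable def solutionAvg {d m : ℕ} (V : Submodule ℚ (Fin d → ℚ)) (N : ℕ)
    (c : (Fin m → ℕ) → ℝ) : ℝ :=
  (∑ᶠ q ∈ {q : Fin d → Fin m → ℕ | (∀ i j, q i j < N) ∧ inVm V q},
      ∏ i : Fin d, c (q i)) / (VboxCard V N : ℝ) ^ m

/-- The weak `L^q` quasinorm of `c : [N]^m → ℝ` with the normalized counting measure. -/
noncomputable def weakNormBox (m N : ℕ) (q : ℝ) (c : (Fin m → ℕ) → ℝ) : ℝ :=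
  ⨆ s : ℝ, if 0 < s then
    s * ((Set.ncard {a : Fin m → ℕ | (∀ j, a j < N) ∧ s < |c a|} : ℝ) / (N : ℝ) ^ m) ^ (1 / q)
  else 0

/-- The `L¹` norm of `c : [N]^m → ℝ` with the normalized counting measure. -/
noncomputable def l1NormBox (m N : ℕ) (c : (Fin m → ℕ) → ℝ) : ℝ :=
  (∑ᶠ a ∈ {a : Fin m → ℕ | ∀ j, a j < N}, |c a|) / (N : ℝ) ^ m

open MeasureTheory

open Classical in
/-- The tuples in `([N]^m)^d` satisfying the condition `V^m`, as a finset. -/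
noncomputable def solutionBox {d : ℕ} (m : ℕ) (V : Submodule ℚ (Fin d → ℚ)) (N : ℕ) :
    Finset (Fin d → Fin m → ℕ) :=
  (Fintype.piFinset fun _ => Fintype.piFinset fun _ => Finset.range N).filter (inVm V)

section Box

variable {d m : ℕ} {V : Submodule ℚ (Fin d → ℚ)} {N : ℕ}

theorem mem_solutionBox {q : Fin d → Fin m → ℕ} :
    q ∈ solutionBox m V N ↔ (∀ i j, q i j < N) ∧ inVm V q := by
  simp [solutionBox]

theorem card_solutionBox_le : (solutionBox m V N).card ≤ N ^ (m * d) := by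
  classical
  refine (Finset.card_filter_le _ _).trans ?_
  simp [pow_mul]

theorem solutionBox_card_pos (hN : 0 < N) : 0 < (solutionBox m V N).card := by
  refine Finset.card_pos.2 ⟨0, mem_solutionBox.2 ⟨fun _ _ => hN, fun j => ?_⟩⟩
  convert V.zero_mem using 1
  ext i
  simp

theorem card_solutionBox : (solutionBox m V N).card = VboxCard V N ^ m := by
  classical
  have hset : {x : Fin d → ℕ | (∀ i, x i < N) ∧ (fun i => ((x i : ℕ) : ℚ)) ∈ V} =
      ((Fintype.piFinset fun _ : Fin d => Finset.range N).filter
        fun x => (fun i => ((x i : ℕ) : ℚ)) ∈ V : Finset (Fin d → ℕ)) := by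
    ext x; simp
  rw [VboxCard, hset, Set.ncard_coe_finset, ← Fintype.card_piFinset_const]
  refine Finset.card_bij (fun q _ => fun j i => q i j) ?_ ?_ ?_
  · intro q hq
    rw [mem_solutionBox] at hq
    simp only [Fintype.mem_piFinset, Finset.mem_filter, Finset.mem_range]
    exact fun j => ⟨fun i => hq.1 i j, hq.2 j⟩
  · intro q _ q' _ h
    ext i j
    exact congrFun (congrFun h j) i
  · intro r hr
    simp only [Fintype.mem_piFinset, Finset.mem_filter, Finset.mem_range] at hr
    exact ⟨fun i j => r j i, mem_solutionBox.2 ⟨fun i j => (hr j).1 i, fun j => (hr j).2⟩, rfl⟩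

theorem solutionAvg_eq (c : (Fin m → ℕ) → ℝ) :
    solutionAvg V N c =
      (∑ q ∈ solutionBox m V N, ∏ i, c (q i)) / ((solutionBox m V N).card : ℝ) := by
  have hset : {q : Fin d → Fin m → ℕ | (∀ i j, q i j < N) ∧ inVm V q} =
      (solutionBox m V N : Set (Fin d → Fin m → ℕ)) := by
    ext q; simp [mem_solutionBox]
  rw [solutionAvg, hset, finsum_mem_coe_finset, card_solutionBox, Nat.cast_pow]

theorem l1NormBox_eq (c : (Fin m → ℕ) → ℝ) :
    l1NormBox m N c =
      (∑ a ∈ Fintype.piFinset fun _ : Fin m => Finset.range N, |c a|) / (N : ℝ) ^ m := by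
  have hset : {a : Fin m → ℕ | ∀ j, a j < N} =
      ((Fintype.piFinset fun _ : Fin m => Finset.range N : Finset (Fin m → ℕ)) :
        Set (Fin m → ℕ)) := by
    ext a; simp
  rw [l1NormBox, hset, finsum_mem_coe_finset]

/-- A function with values in `[0, 1]` has nearly the same sum over a box and over its translate
when enlarging the box barely changes its cardinality. -/
theorem sum_shift_bounds (hV1 : (fun _ : Fin d => (1 : ℚ)) ∈ V) {s : ℕ}
    (H : (Fin d → Fin m → ℤ) → ℝ) (hH : ∀ q, H q ∈ Set.Icc (0 : ℝ) 1)
    (x : Fin d → Fin m → ℤ) (hx : ∀ i j, |x i j| ≤ s)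
    (hxV : ∀ j, (fun i => (x i j : ℚ)) ∈ V) :
    (∑ q ∈ solutionBox m V N, H fun i j => q i j + x i j) ≤
        ∑ q ∈ solutionBox m V (N + 2 * s), H (fun i j => q i j - s) ∧
      (∑ q ∈ solutionBox m V (N + 2 * s), H fun i j => q i j - s) -
          ((solutionBox m V (N + 2 * s)).card - (solutionBox m V N).card) ≤
        ∑ q ∈ solutionBox m V N, H fun i j => q i j + x i j := by
  classical
  let e : (Fin d → Fin m → ℕ) → (Fin d → Fin m → ℕ) :=
    fun q i j => ((q i j : ℤ) + x i j + s).toNat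
  have he : ∀ q i j, ((e q i j : ℕ) : ℤ) = q i j + x i j + s := by
    intro q i j
    have := neg_le_of_abs_le (hx i j)
    exact Int.toNat_of_nonneg (by omega)
  have hinj : Function.Injective e := by
    intro q q' h
    ext i j
    have h1 := he q i j
    rw [h, he q' i j] at h1
    omega
  have hsub : (solutionBox m V N).image e ⊆ solutionBox m V (N + 2 * s) := by
    intro r hr
    obtain ⟨q, hq, rfl⟩ := Finset.mem_image.1 hr
    rw [mem_solutionBox] at hq ⊢
    refine ⟨fun i j => ?_, fun j => ?_⟩
    · have h1 := he q i j
      have h2 := hq.1 i j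
      have h3 := le_of_abs_le (hx i j)
      omega
    · have hadd := V.add_mem (V.add_mem (hq.2 j) (hxV j)) (V.smul_mem (s : ℚ) hV1)
      convert hadd using 1
      ext i
      have h1 := congrArg (Int.cast : ℤ → ℚ) (he q i j)
      push_cast at h1
      simp [h1]
  have hsum : (∑ q ∈ solutionBox m V N, H fun i j => q i j + x i j) =
      ∑ q ∈ (solutionBox m V N).image e, H (fun i j => q i j - s) := by
    rw [Finset.sum_image fun a _ b _ h => hinj h]
    refine Finset.sum_congr rfl fun q _ => congrArg H ?_
    ext i j
    rw [he]; ring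
  have hcard : ((solutionBox m V N).image e).card = (solutionBox m V N).card :=
    Finset.card_image_of_injective _ hinj
  have hsplit := Finset.sum_sdiff hsub (f := fun q => H (fun i j => (q i j : ℤ) - s))
  have hlow : 0 ≤ ∑ q ∈ solutionBox m V (N + 2 * s) \ (solutionBox m V N).image e,
      H (fun i j => (q i j : ℤ) - s) := Finset.sum_nonneg fun q _ => (hH _).1
  have hup : ∑ q ∈ solutionBox m V (N + 2 * s) \ (solutionBox m V N).image e,
      H (fun i j => (q i j : ℤ) - s) ≤
        (solutionBox m V (N + 2 * s)).card - (solutionBox m V N).card := by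
    refine (Finset.sum_le_card_nsmul _ _ 1 fun q _ => (hH _).2).trans ?_
    have := Finset.card_sdiff_add_card_eq_card hsub
    rw [hcard] at this
    rw [← this]
    simp
  rw [hsum]
  constructor <;> linarith

/-- Polynomial growth of the boxes gives arbitrarily large boxes whose enlargement is almost of
the same cardinality. -/
theorem exists_solutionBox_card_le (m : ℕ) (V : Submodule ℚ (Fin d → ℚ)) (s N₁ : ℕ)
    {ε : ℝ} (hε : 0 < ε) :
    ∃ N, N₁ ≤ N ∧ 0 < N ∧
      ((solutionBox m V (N + 2 * s)).card : ℝ) ≤ (1 + ε) * (solutionBox m V N).card := by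
  by_contra! hcon
  set A := N₁ + 1
  have hgrow : ∀ k : ℕ, (1 + ε) ^ k ≤ ((solutionBox m V (A + 2 * s * k)).card : ℝ) := by
    intro k
    induction k with
    | zero =>
      have := solutionBox_card_pos (m := m) (V := V) (Nat.succ_pos N₁)
      simp only [pow_zero, mul_zero, add_zero]
      exact_mod_cast this
    | succ k ih =>
      have h := hcon (A + 2 * s * k) (by omega) (by omega)
      calc (1 + ε) ^ (k + 1) = (1 + ε) * (1 + ε) ^ k := by ring
        _ ≤ (1 + ε) * (solutionBox m V (A + 2 * s * k)).card := by gcongr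
        _ ≤ _ := by
          rw [mul_add, mul_one, ← add_assoc]
          exact h.le
  have hlim := (tendsto_pow_const_div_const_pow_of_one_lt (m * d)
    (show (1 : ℝ) < 1 + ε by linarith)).const_mul (((A + 2 * s : ℕ) : ℝ) ^ (m * d))
  rw [mul_zero] at hlim
  obtain ⟨k, hk, hk1⟩ := ((hlim.eventually_lt_const one_pos).and
    (Filter.eventually_ge_atTop 1)).exists
  have hpos : 0 < (1 + ε) ^ k := by positivity
  rw [← mul_div_assoc, div_lt_one hpos, ← mul_pow] at hk
  have hle : A + 2 * s * k ≤ (A + 2 * s) * k := by nlinarith [Nat.le_mul_of_pos_right A hk1]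
  have h1 : ((solutionBox m V (A + 2 * s * k)).card : ℝ) ≤
      (((A + 2 * s : ℕ) : ℝ) * k) ^ (m * d) := by
    exact_mod_cast card_solutionBox_le.trans (Nat.pow_le_pow_left hle _)
  linarith [hgrow k]

end Box

/-- Finitely many rationals have a common positive denominator. -/
theorem exists_common_denominator {ι : Type*} [Fintype ι] (r : ι → ℚ) :
    ∃ M : ℕ, 0 < M ∧ ∃ w : ι → ℤ, ∀ k, r k * M = w k := by
  refine ⟨∏ k, (r k).den, Finset.prod_pos fun k _ => (r k).den_pos,
    Classical.skolem.1 fun k => (?_ : ∃ z : ℤ, r k * (∏ k, (r k).den : ℕ) = z)⟩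
  obtain ⟨t, ht⟩ := Finset.dvd_prod_of_mem (fun k => (r k).den) (Finset.mem_univ k)
  refine ⟨(r k).num * t, ?_⟩
  rw [ht]
  push_cast
  rw [← mul_assoc, Rat.mul_den_eq_num]

section Torus

variable {d m : ℕ} {V : Submodule ℚ (Fin d → ℚ)}

/-- The image of a rational vector in the torus. -/
def ratTorus (v : Fin d → ℚ) : Fin d → AddCircle (1 : ℝ) :=
  fun i => (((v i : ℚ) : ℝ) : AddCircle (1 : ℝ))

/-- The image of the integer array `q` in the torus after division by `M`. -/
noncomputable def fracTorus (M : ℕ) (q : Fin d → Fin m → ℤ) : Fin d → Fin m → AddCircle (1 : ℝ) :=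
  fun i j => (((q i j : ℝ) / M : ℝ) : AddCircle (1 : ℝ))

theorem fracTorus_add (M : ℕ) (q r : Fin d → Fin m → ℤ) :
    fracTorus M (fun i j => q i j + r i j) = fracTorus M q + fracTorus M r := by
  ext i j
  simp [fracTorus, add_div]

theorem ratTorus_eq_fracTorus {M : ℕ} (hM : 0 < M) {v : Fin d → ℚ} {x : Fin d → Fin m → ℤ}
    {j : Fin m} (h : ∀ i, v i * M = x i j) : ratTorus v = fun i => fracTorus M x i j := by
  ext i
  have h1 := congrArg (Rat.cast : ℚ → ℝ) (h i)
  push_cast at h1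
  have hM' : (M : ℝ) ≠ 0 := by positivity
  simp only [ratTorus, fracTorus]
  rw [← h1, mul_div_cancel_right₀ _ hM']

theorem closure_torus_image (V : Submodule ℚ (Fin d → ℚ)) :
    closure ((fun x : Fin d → ℝ => fun i => ((x i : ℝ) : AddCircle (1 : ℝ))) ''
      closure ((fun x : Fin d → ℚ => fun i => ((x i : ℚ) : ℝ)) '' (V : Set (Fin d → ℚ)))) =
      closure (ratTorus '' (V : Set (Fin d → ℚ))) := by
  have hcont : Continuous (fun x : Fin d → ℝ => fun i => ((x i : ℝ) : AddCircle (1 : ℝ))) :=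
    continuous_pi fun i => (AddCircle.continuous_mk' 1).comp (continuous_apply i)
  rw [closure_image_closure hcont, Set.image_image]
  rfl

theorem const_mem_closure_ratTorus (hV1 : (fun _ : Fin d => (1 : ℚ)) ∈ V)
    (z : AddCircle (1 : ℝ)) :
    (fun _ => z) ∈ closure (ratTorus '' (V : Set (Fin d → ℚ))) := by
  obtain ⟨t, rfl⟩ := QuotientAddGroup.mk_surjective z
  have hcont : Continuous (fun t : ℝ => fun _ : Fin d => (t : AddCircle (1 : ℝ))) :=
    continuous_pi fun i => AddCircle.continuous_mk' 1
  refine map_mem_closure hcont (Rat.denseRange_cast (𝕜 := ℝ) t) ?_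
  rintro _ ⟨r, rfl⟩
  refine ⟨fun _ => r, ?_, rfl⟩
  have h := V.smul_mem r hV1
  rwa [show r • (fun _ : Fin d => (1 : ℚ)) = fun _ => r by ext; simp] at h

theorem fracTorus_mem {M : ℕ} (hM : 0 < M) {x : Fin d → Fin m → ℤ} {j : Fin m}
    (hx : (fun i => (x i j : ℚ)) ∈ V) :
    (fun i => fracTorus M x i j) ∈ closure (ratTorus '' (V : Set (Fin d → ℚ))) := by
  refine subset_closure ⟨_, V.smul_mem (M : ℚ)⁻¹ hx, ratTorus_eq_fracTorus hM fun i => ?_⟩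
  have hM' : (M : ℚ) ≠ 0 := by positivity
  simp only [Pi.smul_apply, smul_eq_mul]
  field_simp

variable (m V) in
/-- The subtorus of `𝕋^{d × m}` attached to `V`. -/
def solutionTorus : Set (Fin d → Fin m → AddCircle (1 : ℝ)) :=
  {y | ∀ j, (fun i => y i j) ∈ closure (ratTorus '' (V : Set (Fin d → ℚ)))}

theorem isClosed_solutionTorus : IsClosed (solutionTorus m V) := by
  have : solutionTorus m V = ⋂ j, (fun y : Fin d → Fin m → AddCircle (1 : ℝ) =>
      fun i => y i j) ⁻¹' closure (ratTorus '' (V : Set (Fin d → ℚ))) := by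
    ext y; simp [solutionTorus]
  rw [this]
  exact isClosed_iInter fun j => isClosed_closure.preimage (by fun_prop)

/-- A bounded set of fractions with a fixed denominator is a `δ`-net of the subtorus. -/
theorem exists_fracTorus_net (m : ℕ) (V : Submodule ℚ (Fin d → ℚ)) {δ : ℝ} (hδ : 0 < δ) :
    ∃ M : ℕ, 0 < M ∧ ∃ s : ℕ, ∀ y ∈ solutionTorus m V, ∃ x : Fin d → Fin m → ℤ,
      (∀ i j, |x i j| ≤ s) ∧ (∀ j, (fun i => (x i j : ℚ)) ∈ V) ∧ dist y (fracTorus M x) < δ := by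
  obtain ⟨T, hTP, hTfin, hT⟩ :=
    (isClosed_solutionTorus (m := m) (V := V)).isCompact.finite_cover_balls (half_pos hδ)
  have hclose : ∀ t : T, ∀ j, ∃ v ∈ V, dist (fun i => t.1 i j) (ratTorus v) < δ / 2 := by
    intro t j
    obtain ⟨_, ⟨v, hv, rfl⟩, h⟩ := Metric.mem_closure_iff.1 (hTP t.2 j) _ (half_pos hδ)
    exact ⟨v, hv, h⟩
  choose v hvV hv using hclose
  have := hTfin.fintype
  obtain ⟨M, hM, w, hw⟩ := exists_common_denominator
    (fun k : T × Fin d × Fin m => v k.1 k.2.2 k.2.1)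
  refine ⟨M, hM, ∑ k, (w k).natAbs, fun y hy => ?_⟩
  obtain ⟨t, htT, ht⟩ := Set.mem_iUnion₂.1 (hT hy)
  refine ⟨fun i j => w (⟨t, htT⟩, i, j), fun i j => ?_, fun j => ?_, ?_⟩
  · have := Finset.single_le_sum (f := fun k => (w k).natAbs) (fun k _ => Nat.zero_le _)
      (Finset.mem_univ (⟨t, htT⟩, i, j))
    rw [Int.abs_eq_natAbs]
    exact_mod_cast this
  · convert V.smul_mem (M : ℚ) (hvV ⟨t, htT⟩ j) using 1
    ext i
    simp [← hw (⟨t, htT⟩, i, j), mul_comm]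
  · have h2 : dist t (fracTorus M fun i j => w (⟨t, htT⟩, i, j)) < δ / 2 := by
      refine (dist_pi_lt_iff (half_pos hδ)).2 fun i => (dist_pi_lt_iff (half_pos hδ)).2 fun j => ?_
      have h3 := hv ⟨t, htT⟩ j
      rw [ratTorus_eq_fracTorus (x := fun i j => w (⟨t, htT⟩, i, j)) (j := j) hM
        fun i => hw (⟨t, htT⟩, i, j)] at h3
      exact (dist_le_pi_dist _ _ i).trans_lt h3
    linarith [dist_triangle y t (fracTorus M fun i j => w (⟨t, htT⟩, i, j)), Metric.mem_ball.1 ht]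

/-- Averages of a continuous function over translates of a suitable finite set of fractions are
almost constant on the subtorus. -/
theorem exists_solutionBox_average (hV1 : (fun _ : Fin d => (1 : ℚ)) ∈ V)
    {F : (Fin d → Fin m → AddCircle (1 : ℝ)) → ℝ} (hF : Continuous F)
    (hF01 : ∀ y, F y ∈ Set.Icc (0 : ℝ) 1) (N₀ : ℕ) {ε : ℝ} (hε : 0 < ε) :
    ∃ M : ℕ, 0 < M ∧ ∃ N, N₀ ≤ N ∧ 0 < N ∧ ∀ y ∈ solutionTorus m V, ∀ y' ∈ solutionTorus m V,
      (∑ q ∈ solutionBox m V N, F (y + fracTorus M fun i j => q i j)) /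
          ((solutionBox m V N).card : ℝ) ≤
        (∑ q ∈ solutionBox m V N, F (y' + fracTorus M fun i j => q i j)) /
          ((solutionBox m V N).card : ℝ) + 3 * ε := by
  obtain ⟨δ, hδ, huc⟩ := Metric.uniformContinuous_iff.1
    (CompactSpace.uniformContinuous_of_continuous hF) ε hε
  obtain ⟨M, hM, s, hnet⟩ := exists_fracTorus_net m V hδ
  obtain ⟨N, hN₀, hN, hcard⟩ := exists_solutionBox_card_le m V s N₀ hε
  refine ⟨M, hM, N, hN₀, hN, fun y hy y' hy' => ?_⟩
  have hpos : (0 : ℝ) < (solutionBox m V N).card := by exact_mod_cast solutionBox_card_pos hN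
  have key : ∀ y (hy : y ∈ solutionTorus m V),
      |(∑ q ∈ solutionBox m V N, F (y + fracTorus M fun i j => q i j)) -
        ∑ q ∈ solutionBox m V N, F (fracTorus M fun i j => q i j + (hnet y hy).choose i j)| ≤
      ε * (solutionBox m V N).card := by
    intro y hy
    rw [← Finset.sum_sub_distrib]
    refine (Finset.abs_sum_le_sum_abs _ _).trans ((Finset.sum_le_card_nsmul _ _ ε ?_).trans ?_)
    · intro q _
      rw [fracTorus_add, add_comm (fracTorus M _), ← Real.dist_eq]
      refine (huc ?_).le
      rw [dist_add_right]
      exact (hnet y hy).choose_spec.2.2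
    · rw [nsmul_eq_mul, mul_comm]
  have hb := fun y (hy : y ∈ solutionTorus m V) =>
    sum_shift_bounds (m := m) (N := N) hV1 (fun q => F (fracTorus M q)) (fun q => hF01 _)
      (hnet y hy).choose (hnet y hy).choose_spec.1 (hnet y hy).choose_spec.2.1
  rw [div_add' _ _ _ hpos.ne', div_le_div_iff_of_pos_right hpos]
  have h1 := abs_le.1 (key y hy)
  have h2 := abs_le.1 (key y' hy')
  linarith [(hb y hy).1, (hb y' hy').2, h1.2, h2.1]

theorem isProbabilityMeasure_volume_torus :
    IsProbabilityMeasure (volume : Measure (Fin m → AddCircle (1 : ℝ))) := by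
  have : IsProbabilityMeasure (volume : Measure (AddCircle (1 : ℝ))) :=
    ⟨by simp [AddCircle.measure_univ]⟩
  infer_instance

theorem integral_average_eq {P : Set (Fin d → Fin m → AddCircle (1 : ℝ))}
    {μ : Measure (Fin d → Fin m → AddCircle (1 : ℝ))} [IsProbabilityMeasure μ]
    (hinv : ∀ g ∈ P, Measure.map (fun y => y + g) μ = μ)
    {F : (Fin d → Fin m → AddCircle (1 : ℝ)) → ℝ} (hF : Continuous F)
    {ι : Type*} {S : Finset ι} (hS : 0 < S.card)
    {e : ι → Fin d → Fin m → AddCircle (1 : ℝ)} (he : ∀ q ∈ S, e q ∈ P) :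
    ∫ y, (∑ q ∈ S, F (y + e q)) / (S.card : ℝ) ∂μ = ∫ y, F y ∂μ := by
  have hS' : (S.card : ℝ) ≠ 0 := by positivity
  have hint : ∀ q ∈ S, Integrable (fun y => F (y + e q)) μ := fun q _ =>
    (hF.comp (continuous_add_const (e q))).integrable_of_hasCompactSupport
      (HasCompactSupport.of_compactSpace _)
  rw [integral_div, integral_finsetSum _ hint]
  have hq : ∀ q ∈ S, ∫ y, F (y + e q) ∂μ = ∫ y, F y ∂μ := by
    intro q hq
    conv_rhs => rw [← hinv _ (he q hq)]
    rw [integral_map (by fun_prop) hF.aestronglyMeasurable]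
  rw [Finset.sum_congr rfl hq, Finset.sum_const, nsmul_eq_mul, mul_div_cancel_left₀ _ hS']

/-- Some translate of a continuous function, sampled on a grid, has at least its mean as `L¹`
norm. -/
theorem exists_integral_le_l1NormBox {g : (Fin m → AddCircle (1 : ℝ)) → ℝ} (hg : Continuous g)
    (hg0 : ∀ x, 0 ≤ g x) {N : ℕ} (hN : 0 < N) (e : (Fin m → ℕ) → Fin m → AddCircle (1 : ℝ)) :
    ∃ z, ∫ x, g x ≤ l1NormBox m N fun a => g (z + e a) := by
  have hint : ∀ a, Integrable (fun z => g (z + e a)) := fun a =>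
    (hg.comp (continuous_add_const (e a))).integrable_of_hasCompactSupport
      (HasCompactSupport.of_compactSpace _)
  have hmean : ∫ z, l1NormBox m N (fun a => g (z + e a)) = ∫ x, g x := by
    simp only [l1NormBox_eq, abs_of_nonneg (hg0 _)]
    rw [integral_div, integral_finsetSum _ fun a _ => hint a]
    simp only [integral_add_right_eq_self, Finset.sum_const, Fintype.card_piFinset_const,
      Finset.card_range, nsmul_eq_mul, Nat.cast_pow]
    have : (N : ℝ) ≠ 0 := by positivity
    field_simp
  have hi : Integrable (fun z => l1NormBox m N fun a => g (z + e a)) := by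
    simp only [l1NormBox_eq, abs_of_nonneg (hg0 _)]
    exact (integrable_finsetSum _ fun a _ => hint a).div_const _
  have := isProbabilityMeasure_volume_torus (m := m)
  obtain ⟨z, hz⟩ := exists_integral_le hi
  exact ⟨z, hmean ▸ hz⟩

theorem integral_prod_ge_of_continuous (hV1 : (fun _ : Fin d => (1 : ℚ)) ∈ V) (N₀ ℓ : ℕ)
    {K : ℝ} (hK : 0 ≤ K)
    (hyp : ∀ N ≥ N₀, ∀ c : (Fin m → ℕ) → ℝ, (∀ a, c a ∈ Set.Icc (0 : ℝ) 1) →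
      solutionAvg V N c ≥ K * l1NormBox m N c ^ ℓ)
    {μ : Measure (Fin d → Fin m → AddCircle (1 : ℝ))} [IsProbabilityMeasure μ]
    (hsupp : ∀ᵐ y ∂μ, y ∈ solutionTorus m V)
    (hinv : ∀ g ∈ solutionTorus m V, Measure.map (fun y => y + g) μ = μ)
    {g : (Fin m → AddCircle (1 : ℝ)) → ℝ} (hg : Continuous g)
    (hg01 : ∀ x, g x ∈ Set.Icc (0 : ℝ) 1) :
    K * (∫ x, g x) ^ ℓ ≤ ∫ y, ∏ i, g (y i) ∂μ := by
  have hF : Continuous fun y : Fin d → Fin m → AddCircle (1 : ℝ) => ∏ i, g (y i) := by fun_prop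
  have hF01 : ∀ y : Fin d → Fin m → AddCircle (1 : ℝ), ∏ i, g (y i) ∈ Set.Icc (0 : ℝ) 1 :=
    fun y => ⟨Finset.prod_nonneg fun i _ => (hg01 _).1,
      Finset.prod_le_one (fun i _ => (hg01 _).1) fun i _ => (hg01 _).2⟩
  refine le_of_forall_pos_le_add fun η hη => ?_
  obtain ⟨M, hM, N, hN₀, hN, havg⟩ := exists_solutionBox_average (V := V) hV1 hF hF01 N₀
    (show 0 < η / 3 by positivity)
  obtain ⟨z, hz⟩ := exists_integral_le_l1NormBox hg (fun x => (hg01 x).1) hN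
    fun a j => (((a j : ℝ) / M : ℝ) : AddCircle (1 : ℝ))
  have hmem : (fun _ : Fin d => z) ∈ solutionTorus m V := fun j =>
    const_mem_closure_ratTorus hV1 (z j)
  have hmean := integral_average_eq hinv hF (solutionBox_card_pos (m := m) (V := V) hN)
    (e := fun q => fracTorus M fun i j => (q i j : ℤ))
    (fun q hq j => fracTorus_mem hM (by simpa using (mem_solutionBox.1 hq).2 j))
  have hint : Integrable (fun y : Fin d → Fin m → AddCircle (1 : ℝ) =>
      (∑ q ∈ solutionBox m V N, ∏ i, g ((y + fracTorus M fun i j => (q i j : ℤ)) i)) /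
        ((solutionBox m V N).card : ℝ)) μ := by
    refine Continuous.integrable_of_hasCompactSupport ?_ (HasCompactSupport.of_compactSpace _)
    fun_prop
  have hg0 : 0 ≤ ∫ x, g x := integral_nonneg fun x => (hg01 x).1
  have hlower := hyp N hN₀ (fun a => g (z + fun j => (((a j : ℝ) / M : ℝ) : AddCircle (1 : ℝ))))
    fun a => hg01 _
  rw [solutionAvg_eq] at hlower
  calc K * (∫ x, g x) ^ ℓ
      ≤ (∑ q ∈ solutionBox m V N, ∏ i, g (z + fun j => (((q i j : ℝ) / M : ℝ) :
          AddCircle (1 : ℝ)))) / ((solutionBox m V N).card : ℝ) := by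
        refine le_trans ?_ hlower
        gcongr
    _ = ∫ _, (∑ q ∈ solutionBox m V N, ∏ i, g (z + fun j => (((q i j : ℝ) / M : ℝ) :
          AddCircle (1 : ℝ)))) / ((solutionBox m V N).card : ℝ) ∂μ := by simp
    _ ≤ ∫ y, ((∑ q ∈ solutionBox m V N, ∏ i, g ((y + fracTorus M fun i j => (q i j : ℤ)) i)) /
          ((solutionBox m V N).card : ℝ) + 3 * (η / 3)) ∂μ := by
        refine integral_mono_ae (integrable_const _) (hint.add (integrable_const _)) ?_
        filter_upwards [hsupp] with y hy
        have := havg _ hmem y hy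
        simpa [fracTorus, Pi.add_def] using this
    _ = (∫ y, ∏ i, g (y i) ∂μ) + η := by
        rw [integral_add hint (integrable_const _), hmean]
        simp
        ring

/-- The coordinate marginals of an invariant probability measure on the subtorus are Haar. -/
theorem map_eval_eq_volume (hV1 : (fun _ : Fin d => (1 : ℚ)) ∈ V)
    {μ : Measure (Fin d → Fin m → AddCircle (1 : ℝ))} [IsProbabilityMeasure μ]
    (hinv : ∀ g ∈ solutionTorus m V, Measure.map (fun y => y + g) μ = μ) (i : Fin d) :
    μ.map (fun y => y i) = volume := by
  have hmeas : Measurable fun y : Fin d → Fin m → AddCircle (1 : ℝ) => y i := measurable_pi_apply i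
  have : IsProbabilityMeasure (μ.map fun y => y i) :=
    Measure.isProbabilityMeasure_map hmeas.aemeasurable
  have : (μ.map fun y => y i).IsAddLeftInvariant := by
    refine ⟨fun z => ?_⟩
    have hz := hinv (fun _ => z) fun j => const_mem_closure_ratTorus hV1 (z j)
    conv_rhs => rw [← hz]
    rw [Measure.map_map (by fun_prop) hmeas, Measure.map_map hmeas (by fun_prop)]
    congr 1
    ext y j
    simp [add_comm]
  have : (μ.map fun y => y i).IsAddHaarMeasure :=
    Measure.isAddHaarMeasure_of_isCompact_nonempty_interior _ Set.univ isCompact_univ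
      (by simp) (by simp) (by simp)
  have := isProbabilityMeasure_volume_torus (m := m)
  exact Measure.isAddHaarMeasure_eq_of_isProbabilityMeasure _ _

theorem abs_prod_sub_prod_le {ι : Type*} (s : Finset ι) {a b : ι → ℝ}
    (ha : ∀ i, a i ∈ Set.Icc (0 : ℝ) 1) (hb : ∀ i, b i ∈ Set.Icc (0 : ℝ) 1) :
    |∏ i ∈ s, a i - ∏ i ∈ s, b i| ≤ ∑ i ∈ s, |a i - b i| := by
  classical
  induction s using Finset.induction_on with
  | empty => simp
  | insert k s hk ih =>
    rw [Finset.prod_insert hk, Finset.prod_insert hk, Finset.sum_insert hk]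
    have hP0 : 0 ≤ ∏ i ∈ s, a i := Finset.prod_nonneg fun i _ => (ha i).1
    have hP1 : ∏ i ∈ s, a i ≤ 1 := Finset.prod_le_one (fun i _ => (ha i).1) fun i _ => (ha i).2
    calc |a k * ∏ i ∈ s, a i - b k * ∏ i ∈ s, b i|
        = |(a k - b k) * ∏ i ∈ s, a i + b k * (∏ i ∈ s, a i - ∏ i ∈ s, b i)| := by
          congr 1; ring
      _ ≤ |a k - b k| * ∏ i ∈ s, a i + b k * |∏ i ∈ s, a i - ∏ i ∈ s, b i| := by
          refine (abs_add_le _ _).trans ?_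
          rw [abs_mul, abs_mul, abs_of_nonneg hP0, abs_of_nonneg (hb k).1]
      _ ≤ |a k - b k| * 1 + 1 * ∑ i ∈ s, |a i - b i| := by
          gcongr
          exact (hb k).2
      _ = _ := by ring

/-- A measurable function with values in `[0, 1]` is an `L¹` limit of continuous ones. -/
theorem exists_continuous_integral_abs_sub_le {f : (Fin m → AddCircle (1 : ℝ)) → ℝ}
    (hf : Measurable f) (hf01 : ∀ x, f x ∈ Set.Icc (0 : ℝ) 1) {ε : ℝ} (hε : 0 < ε) :
    ∃ g : (Fin m → AddCircle (1 : ℝ)) → ℝ, Continuous g ∧ (∀ x, g x ∈ Set.Icc (0 : ℝ) 1) ∧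
      ∫ x, |f x - g x| ≤ ε := by
  have hfi : Integrable f := Integrable.of_bound hf.aestronglyMeasurable 1
    (Filter.Eventually.of_forall fun x => by
      rw [Real.norm_eq_abs, abs_of_nonneg (hf01 x).1]; exact (hf01 x).2)
  obtain ⟨g, -, hg, hgc, hgi⟩ := hfi.exists_hasCompactSupport_integral_sub_le hε
  have hclamp : Continuous fun x => max 0 (min (g x) 1) := by fun_prop
  refine ⟨fun x => max 0 (min (g x) 1), hclamp, fun x => ⟨le_max_left _ _, by simp⟩,
    le_trans (integral_mono ?_ ?_ fun x => ?_) hg⟩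
  · exact (hfi.sub (hclamp.integrable_of_hasCompactSupport
      (HasCompactSupport.of_compactSpace _))).abs
  · exact (hfi.sub hgi).norm
  · have h1 : f x = max 0 (min (f x) 1) := by
      rw [min_eq_left (hf01 x).2, max_eq_right (hf01 x).1]
    simp only [Real.norm_eq_abs]
    calc |f x - max 0 (min (g x) 1)| = |max 0 (min (f x) 1) - max 0 (min (g x) 1)| := by
          rw [← h1]
      _ ≤ |min (f x) 1 - min (g x) 1| := by
          simpa [max_comm] using abs_max_sub_max_le_abs (min (f x) 1) (min (g x) 1) 0
      _ ≤ |f x - g x| := by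
          simpa using abs_min_sub_min_le_max (f x) 1 (g x) 1

end Torus


theorem equivalent_inequalities_three_implies_four
    (m d ℓ : ℕ) (hdℓ : d < ℓ) (C : ℝ) (hC : 0 < C)
    (V : Submodule ℚ (Fin d → ℚ)) (hV1 : (fun _ : Fin d => (1 : ℚ)) ∈ V)
    (N₀ : ℕ)
    (hyp : ∀ N ≥ N₀, ∀ c : (Fin m → ℕ) → ℝ, (∀ a, c a ∈ Set.Icc (0 : ℝ) 1) →
      solutionAvg V N c ≥ C * (1 - (d : ℝ) / ℓ) ^ ℓ * l1NormBox m N c ^ ℓ)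
    (Vbar : Set (Fin d → ℝ))
    (hVbar : Vbar = closure ((fun x : Fin d → ℚ => fun i => ((x i : ℚ) : ℝ)) '' (V : Set (Fin d → ℚ))))
    (Ytor : Set (Fin d → AddCircle (1 : ℝ)))
    (hY : Ytor = closure ((fun x : Fin d → ℝ => fun i => ((x i : ℝ) : AddCircle (1 : ℝ))) '' Vbar))
    (μY : Measure (Fin d → Fin m → AddCircle (1 : ℝ)))
    (hprob : IsProbabilityMeasure μY)
    (hsupp : μY {y : Fin d → Fin m → AddCircle (1 : ℝ) | ∀ j, (fun i => y i j) ∈ Ytor} = 1)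
    (hinv : ∀ g : Fin d → Fin m → AddCircle (1 : ℝ), (∀ j, (fun i => g i j) ∈ Ytor) →
      Measure.map (fun y => y + g) μY = μY)
    (f : (Fin m → AddCircle (1 : ℝ)) → ℝ) (hf : Measurable f)
    (hf01 : ∀ x, f x ∈ Set.Icc (0 : ℝ) 1) :
    (∫ y, ∏ i : Fin d, f (y i) ∂μY) ≥
      C * (1 - (d : ℝ) / ℓ) ^ ℓ * (∫ x, f x) ^ ℓ := by
  subst hVbar
  rw [closure_torus_image] at hY
  subst hY
  have hK : 0 ≤ C * (1 - (d : ℝ) / ℓ) ^ ℓ := by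
    have : (d : ℝ) / ℓ ≤ 1 := div_le_one_of_le₀ (by exact_mod_cast hdℓ.le) (Nat.cast_nonneg _)
    have : 0 ≤ 1 - (d : ℝ) / ℓ := by linarith
    positivity
  have hsupp' : ∀ᵐ y ∂μY, y ∈ solutionTorus m V :=
    (mem_ae_iff_prob_eq_one isClosed_solutionTorus.measurableSet).2 hsupp
  have hfi : Integrable f := Integrable.of_bound hf.aestronglyMeasurable 1
    (Filter.Eventually.of_forall fun x => by
      rw [Real.norm_eq_abs, abs_of_nonneg (hf01 x).1]; exact (hf01 x).2)
  have hprodi : ∀ {h : (Fin m → AddCircle (1 : ℝ)) → ℝ}, Measurable h →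
      (∀ x, h x ∈ Set.Icc (0 : ℝ) 1) →
      Integrable (fun y : Fin d → Fin m → AddCircle (1 : ℝ) => ∏ i, h (y i)) μY := by
    intro h hm h01
    refine Integrable.of_bound (Finset.measurable_fun_prod _ fun i _ =>
      hm.comp (measurable_pi_apply i)).aestronglyMeasurable 1 (Filter.Eventually.of_forall fun y => ?_)
    rw [Real.norm_eq_abs, abs_of_nonneg (Finset.prod_nonneg fun i _ => (h01 _).1)]
    exact Finset.prod_le_one (fun i _ => (h01 _).1) fun i _ => (h01 _).2
  have hlim : ∀ n : ℕ, ∃ g : (Fin m → AddCircle (1 : ℝ)) → ℝ, Continuous g ∧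
      (∀ x, g x ∈ Set.Icc (0 : ℝ) 1) ∧ ∫ x, |f x - g x| ≤ 1 / ((n : ℝ) + 1) := fun n =>
    exists_continuous_integral_abs_sub_le hf hf01 Nat.one_div_pos_of_nat
  choose g hgc hg01 hgε using hlim
  have hgi : ∀ n, Integrable (g n) := fun n =>
    (hgc n).integrable_of_hasCompactSupport (HasCompactSupport.of_compactSpace _)
  have htend : Filter.Tendsto (fun n => ∫ x, g n x) Filter.atTop (nhds (∫ x, f x)) := by
    refine tendsto_iff_dist_tendsto_zero.2
      (squeeze_zero (fun _ => dist_nonneg) (fun n => ?_) tendsto_one_div_add_atTop_nhds_zero_nat)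
    rw [dist_comm, Real.dist_eq, ← integral_sub hfi (hgi n)]
    exact abs_integral_le_integral_abs.trans (hgε n)
  have hbound : ∀ n : ℕ, C * (1 - (d : ℝ) / ℓ) ^ ℓ * (∫ x, g n x) ^ ℓ ≤
      (∫ y, ∏ i : Fin d, f (y i) ∂μY) + d * (1 / ((n : ℝ) + 1)) := by
    intro n
    refine (integral_prod_ge_of_continuous hV1 N₀ ℓ hK hyp hsupp' hinv (hgc n) (hg01 n)).trans ?_
    have hdi : Integrable fun x => |f x - g n x| := (hfi.sub (hgi n)).abs
    have hmap : ∀ i : Fin d, MeasurePreserving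
        (fun y : Fin d → Fin m → AddCircle (1 : ℝ) => y i) μY volume := fun i =>
      ⟨measurable_pi_apply i, map_eval_eq_volume hV1 hinv i⟩
    have hdi' : ∀ i : Fin d, Integrable (fun y : Fin d → Fin m → AddCircle (1 : ℝ) =>
        |f (y i) - g n (y i)|) μY := fun i => (hmap i).integrable_comp_of_integrable hdi
    have hsum : ∫ y, ∑ i : Fin d, |f (y i) - g n (y i)| ∂μY ≤ d * (1 / ((n : ℝ) + 1)) := by
      rw [integral_finsetSum _ fun i _ => hdi' i]
      refine (Finset.sum_le_card_nsmul _ _ (1 / ((n : ℝ) + 1)) fun i _ => ?_).trans (by simp)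
      refine le_of_eq_of_le ?_ (hgε n)
      rw [← (hmap i).map_eq, integral_map (hmap i).measurable.aemeasurable]
      rw [(hmap i).map_eq]
      exact hdi.aestronglyMeasurable
    refine le_trans ?_ (add_le_add_right hsum _)
    rw [← integral_add (hprodi hf hf01) (integrable_finsetSum _ fun i _ => hdi' i)]
    refine integral_mono (hprodi (hgc n).measurable (hg01 n))
      ((hprodi hf hf01).add (integrable_finsetSum _ fun i _ => hdi' i)) fun y => ?_
    have := abs_le.1 (abs_prod_sub_prod_le Finset.univ (fun i => hf01 (y i))
      fun i => hg01 n (y i))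
    simp only
    linarith [this.1]
  have hleft := (htend.pow ℓ).const_mul (C * (1 - (d : ℝ) / ℓ) ^ ℓ)
  have hright := ((tendsto_one_div_add_atTop_nhds_zero_nat (𝕜 := ℝ)).const_mul (d : ℝ)).const_add
    (∫ y, ∏ i : Fin d, f (y i) ∂μY)
  rw [mul_zero, add_zero] at hright
  exact le_of_tendsto_of_tendsto' hleft hright hbound
end
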